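/- Let m > 1, n ≥ 1, λ = ((m−1)n + 2)^{−1}, C₁ > 0, x* ∈ ℝ^n, and let 0 < a ≤ 1/4. Set C = a^{λ/2}, U(x,t) = ( C(t+1)^{2λ} − (λ/2)|x|² ) / (t+1), c(t) = √C (t+1)^{λ−1}, and define Ũ(x,t) = U(x − x*, t) − 2C₁ a ∫₀^t c(s) ds. Then at every point (x,t) with 0 ≤ t ≤ a^{−1} and Ũ(x,t) > 0, one has Ũ_t ≤ (m−1)ŨΔŨ + |DŨ|² − C₁ a (|DŨ| + a Ũ). -/

import Mathlib

open Real MeasureTheory Metric Set Filter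
open scoped RealInnerProductSpace

/-- The spatial Laplacian of a function on `ℝⁿ`, as a sum of second partial derivatives. -/
noncomputable def lapl {n : ℕ} (f : EuclideanSpace ℝ (Fin n) → ℝ)
    (x : EuclideanSpace ℝ (Fin n)) : ℝ :=
  ∑ i : Fin n, fderiv ℝ (fun y => fderiv ℝ f y (EuclideanSpace.single i 1)) x
    (EuclideanSpace.single i 1)

/-!
The Barenblatt pressure `U` solves `U_t = (m - 1) U ΔU + |DU|²` exactly and satisfies `ΔU ≤ 0`.
Lowering `U` by a nonnegative function `h` of time subtracts `h'` from the left-hand side and adds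
`-(m - 1) h ΔU ≥ 0` to the right-hand side, so `U - h` is a subsolution with `h'` to spare. On
`{U ≥ 0}` both `|DU|` and `aU` are at most `c`; taking `h' = 2 C₁ a c` therefore pays for the drift
error `C₁ a (|DU| + aU)`.
-/

section SpatialOperators

variable {n : ℕ}

lemma lapl_sub_const (f : EuclideanSpace ℝ (Fin n) → ℝ) (b : ℝ) (x : EuclideanSpace ℝ (Fin n)) :
    lapl (fun y => f y - b) x = lapl f x := by
  simp only [lapl, fderiv_sub_const]

lemma lapl_comp_sub_right (f : EuclideanSpace ℝ (Fin n) → ℝ) (v x : EuclideanSpace ℝ (Fin n)) :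
    lapl (fun y => f (y - v)) x = lapl f (x - v) := by
  simp only [lapl, fderiv_comp_sub]
  exact Finset.sum_congr rfl fun i _ => by
    rw [fderiv_comp_sub (f := fun y => fderiv ℝ f y (EuclideanSpace.single i 1))]

lemma lapl_eq_mul_of_hasGradientAt_smul {f : EuclideanSpace ℝ (Fin n) → ℝ} {k : ℝ}
    (hf : ∀ y, HasGradientAt f (k • y) y) (x : EuclideanSpace ℝ (Fin n)) :
    lapl f x = k * n := by
  have partial_eq (i : Fin n) :
      (fun y => fderiv ℝ f y (EuclideanSpace.single i 1)) =
        ⇑(k • EuclideanSpace.proj i : EuclideanSpace ℝ (Fin n) →L[ℝ] ℝ) := by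
    ext y
    simp [(hf y).fderiv_apply, EuclideanSpace.inner_single_right]
  simp only [lapl, partial_eq, ContinuousLinearMap.fderiv]
  simp [mul_comm]

variable {E : Type*} [NormedAddCommGroup E] [InnerProductSpace ℝ E] [CompleteSpace E]

lemma gradient_sub_const (f : E → ℝ) (b : ℝ) (x : E) :
    gradient (fun y => f y - b) x = gradient f x := by
  simp only [gradient, fderiv_sub_const]

lemma gradient_comp_sub_right (f : E → ℝ) (v x : E) :
    gradient (fun y => f (y - v)) x = gradient f (x - v) := by
  simp only [gradient, fderiv_comp_sub]

end SpatialOperators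

section PressureEquation

variable {n : ℕ} {m : ℝ}

/-- The spatial part of the pressure form `u_t = (m - 1) u Δu + |Du|²` of the porous medium
equation with exponent `m`. -/
noncomputable def pressureOperator (m : ℝ) (f : EuclideanSpace ℝ (Fin n) → ℝ)
    (x : EuclideanSpace ℝ (Fin n)) : ℝ :=
  (m - 1) * f x * lapl f x + ‖gradient f x‖ ^ 2

lemma pressureOperator_comp_sub_right (f : EuclideanSpace ℝ (Fin n) → ℝ)
    (v x : EuclideanSpace ℝ (Fin n)) :
    pressureOperator m (fun y => f (y - v)) x = pressureOperator m f (x - v) := by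
  simp only [pressureOperator, lapl_comp_sub_right, gradient_comp_sub_right]

lemma pressureOperator_le_sub_const (hm : 1 ≤ m) {f : EuclideanSpace ℝ (Fin n) → ℝ}
    {x : EuclideanSpace ℝ (Fin n)} (hf : lapl f x ≤ 0) {b : ℝ} (hb : 0 ≤ b) :
    pressureOperator m f x ≤ pressureOperator m (fun y => f y - b) x := by
  simp only [pressureOperator, lapl_sub_const, gradient_sub_const]
  have gain : 0 ≤ (m - 1) * b * -lapl f x :=
    mul_nonneg (mul_nonneg (sub_nonneg.2 hm) hb) (neg_nonneg.2 hf)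
  linarith

lemma deriv_sub_le_pressureOperator_sub (hm : 1 ≤ m) {u : EuclideanSpace ℝ (Fin n) → ℝ → ℝ}
    {h : ℝ → ℝ} {u' h' t : ℝ} {x : EuclideanSpace ℝ (Fin n)}
    (hu : HasDerivAt (u x) u' t) (hsub : u' ≤ pressureOperator m (u · t) x)
    (hlapl : lapl (u · t) x ≤ 0) (hh : HasDerivAt h h' t) (hh0 : 0 ≤ h t) :
    deriv (fun s => u x s - h s) t ≤ pressureOperator m (fun y => u y t - h t) x - h' := by
  rw [(hu.fun_sub hh).deriv]
  exact sub_le_sub_right (hsub.trans (pressureOperator_le_sub_const hm hlapl hh0)) h'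

end PressureEquation

section BarenblattExponent

/-- The exponent `λ = ((m - 1) n + 2)⁻¹` in the self-similar scaling of the Barenblatt solution of
the porous medium equation with exponent `m` in dimension `n`. -/
noncomputable def barenblattExponent (n : ℕ) (m : ℝ) : ℝ :=
  ((m - 1) * n + 2)⁻¹

variable (n : ℕ) {m : ℝ}

lemma sub_one_mul_nat_nonneg (hm : 1 ≤ m) : 0 ≤ (m - 1) * n :=
  mul_nonneg (sub_nonneg.2 hm) n.cast_nonneg

lemma barenblattExponent_pos (hm : 1 ≤ m) : 0 < barenblattExponent n m := by
  have := sub_one_mul_nat_nonneg n hm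
  unfold barenblattExponent
  positivity

lemma barenblattExponent_le_half (hm : 1 ≤ m) : barenblattExponent n m ≤ 1 / 2 := by
  rw [barenblattExponent, ← one_div]
  exact one_div_le_one_div_of_le two_pos (le_add_of_nonneg_left (sub_one_mul_nat_nonneg n hm))

lemma mul_barenblattExponent (hm : 1 ≤ m) :
    (m - 1) * n * barenblattExponent n m = 1 - 2 * barenblattExponent n m := by
  have : (m - 1) * n + 2 ≠ 0 := by linarith [sub_one_mul_nat_nonneg n hm]
  unfold barenblattExponent
  field_simp
  ring

end BarenblattExponent

section BarenblattPressure

variable {E : Type*} [NormedAddCommGroup E]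

/-- The Barenblatt pressure profile `U` issuing from a point mass at time `-1`. It is not truncated
at zero, so that it is smooth for `t > -1`. -/
noncomputable def barenblattPressure (lam C : ℝ) (x : E) (t : ℝ) : ℝ :=
  (C * (t + 1) ^ (2 * lam) - lam / 2 * ‖x‖ ^ 2) / (t + 1)

/-- The function `c(t) = √C (t + 1) ^ (λ - 1)`, an upper bound on `{U ≥ 0}` for the speed `|DU|` of
the Barenblatt pressure `U` and the rate at which the barrier is lowered. -/
noncomputable def barenblattSpeed (lam C t : ℝ) : ℝ :=
  √C * (t + 1) ^ (lam - 1)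

variable {lam C a t : ℝ} {x : E}

lemma barenblattSpeed_nonneg (ht : -1 ≤ t) : 0 ≤ barenblattSpeed lam C t :=
  mul_nonneg (Real.sqrt_nonneg C) (Real.rpow_nonneg (by linarith) _)

lemma barenblattSpeed_eq_div (ht : -1 < t) :
    barenblattSpeed lam C t = √C * (t + 1) ^ lam / (t + 1) := by
  rw [barenblattSpeed, Real.rpow_sub_one (by linarith), mul_div_assoc]

lemma continuousOn_barenblattSpeed : ContinuousOn (barenblattSpeed lam C) (Ioi (-1)) :=
  continuousOn_const.mul <| (continuousOn_id.add continuousOn_const).rpow_const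
    fun _ hs => Or.inl (neg_lt_iff_pos_add.1 hs).ne'

lemma hasDerivAt_integral_barenblattSpeed (ht : -1 < t) :
    HasDerivAt (fun s => ∫ r in (0 : ℝ)..s, barenblattSpeed lam C r)
      (barenblattSpeed lam C t) t := by
  have interval_subset : uIcc 0 t ⊆ Ioi (-1) :=
    ordConnected_Ioi.uIcc_subset (by simp) ht
  exact intervalIntegral.integral_hasDerivAt_right
    (continuousOn_barenblattSpeed.mono interval_subset).intervalIntegrable
    (continuousOn_barenblattSpeed.stronglyMeasurableAtFilter isOpen_Ioi t ht)
    (continuousOn_barenblattSpeed.continuousAt (Ioi_mem_nhds ht))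

lemma integral_barenblattSpeed_nonneg (ht : 0 ≤ t) :
    0 ≤ ∫ s in (0 : ℝ)..t, barenblattSpeed lam C s :=
  intervalIntegral.integral_nonneg ht fun _ hs => barenblattSpeed_nonneg (by linarith [hs.1])

lemma hasDerivAt_barenblattPressure (ht : -1 < t) :
    HasDerivAt (barenblattPressure lam C x)
      (-(1 - 2 * lam) / (t + 1) * barenblattPressure lam C x t + (lam / (t + 1) * ‖x‖) ^ 2) t := by
  have pos : 0 < t + 1 := by linarith
  have shift : HasDerivAt (fun s : ℝ => s + 1) 1 t := (hasDerivAt_id t).add_const 1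
  have power := shift.rpow_const (p := 2 * lam) (Or.inl pos.ne')
  rw [Real.rpow_sub_one pos.ne'] at power
  refine (((power.const_mul C).sub_const (lam / 2 * ‖x‖ ^ 2)).div shift pos.ne').congr_deriv ?_
  rw [barenblattPressure]
  field_simp
  ring

lemma mul_barenblattPressure_le_barenblattSpeed (ha : 0 ≤ a) (hlam : 0 ≤ lam) (hC : 0 ≤ C)
    (ht : -1 < t) (haC : a * √C * (t + 1) ^ lam ≤ 1) :
    a * barenblattPressure lam C x t ≤ barenblattSpeed lam C t := by
  have pos : 0 < t + 1 := by linarith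
  calc a * barenblattPressure lam C x t
      ≤ a * (C * (t + 1) ^ (2 * lam) / (t + 1)) := by
        unfold barenblattPressure
        gcongr
        exact sub_le_self _ (by positivity)
    _ = a * √C * (t + 1) ^ lam * barenblattSpeed lam C t := by
        rw [barenblattSpeed_eq_div ht, two_mul, Real.rpow_add pos]
        nth_rw 1 [← Real.mul_self_sqrt hC]
        ring
    _ ≤ barenblattSpeed lam C t := mul_le_of_le_one_left (barenblattSpeed_nonneg ht.le) haC

variable [InnerProductSpace ℝ E] [CompleteSpace E]

lemma hasGradientAt_barenblattPressure (lam C t : ℝ) (x : E) :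
    HasGradientAt (barenblattPressure lam C · t) (-(lam / (t + 1)) • x) x := by
  have := (((hasStrictFDerivAt_norm_sq x).hasFDerivAt.const_mul (lam / 2)).const_sub
    (C * (t + 1) ^ (2 * lam))).mul_const (t + 1)⁻¹
  refine hasGradientAt_iff_hasFDerivAt.2 (this.congr_fderiv ?_)
  ext v
  simp
  ring

lemma norm_gradient_barenblattPressure (hlam : 0 ≤ lam) (ht : -1 < t) :
    ‖gradient (barenblattPressure lam C · t) x‖ = lam / (t + 1) * ‖x‖ := by
  have pos : 0 < t + 1 := by linarith
  rw [(hasGradientAt_barenblattPressure lam C t x).gradient, norm_smul, norm_neg,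
    Real.norm_of_nonneg (by positivity)]

lemma norm_gradient_barenblattPressure_le_barenblattSpeed (hlam : 0 ≤ lam) (hlam' : lam ≤ 1 / 2)
    (ht : -1 < t) (hU : 0 ≤ barenblattPressure lam C x t) :
    ‖gradient (barenblattPressure lam C · t) x‖ ≤ barenblattSpeed lam C t := by
  have pos : 0 < t + 1 := by linarith
  have support : lam / 2 * ‖x‖ ^ 2 ≤ C * (t + 1) ^ (2 * lam) :=
    by
    simpa only [zero_mul, sub_nonneg] using (le_div_iff₀ pos).1 hU
  have square_le : (lam * ‖x‖) ^ 2 ≤ C * ((t + 1) ^ lam) ^ 2 :=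
    calc (lam * ‖x‖) ^ 2 = 2 * lam * (lam / 2 * ‖x‖ ^ 2) := by ring
      _ ≤ 1 * (lam / 2 * ‖x‖ ^ 2) := by gcongr; linarith
      _ ≤ C * ((t + 1) ^ lam) ^ 2 := by
        rwa [one_mul, ← Real.rpow_mul_natCast pos.le, Nat.cast_two, mul_comm lam 2]
  rw [norm_gradient_barenblattPressure hlam ht, barenblattSpeed_eq_div ht, div_mul_eq_mul_div]
  refine div_le_div_of_nonneg_right ?_ pos.le
  calc lam * ‖x‖ ≤ √(C * ((t + 1) ^ lam) ^ 2) := Real.le_sqrt_of_sq_le square_le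
    _ = √C * (t + 1) ^ lam := by
      rw [Real.sqrt_mul' C (sq_nonneg _), Real.sqrt_sq (Real.rpow_nonneg pos.le lam)]

end BarenblattPressure

lemma mul_sqrt_mul_rpow_le_one {lam C a t : ℝ} (hlam : 0 ≤ lam) (hlam' : lam ≤ 1 / 2)
    (hC : C ≤ 1) (ha : 0 < a) (ha' : a ≤ 1 / 2) (ht : 0 ≤ t) (hta : t ≤ a⁻¹) :
    a * √C * (t + 1) ^ lam ≤ 1 := by
  have bernoulli : (t + 1) ^ lam ≤ 1 + lam * t := by
    rw [add_comm t 1]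
    exact rpow_one_add_le_one_add_mul_self (by linarith) hlam (by linarith)
  calc a * √C * (t + 1) ^ lam ≤ a * 1 * (1 + 1 / 2 * a⁻¹) := by
        gcongr
        · exact Real.sqrt_le_one.2 hC
        · exact bernoulli.trans (by gcongr)
    _ = a + 1 / 2 := by field_simp
    _ ≤ 1 := by linarith

section LoweredBarenblatt

variable {n : ℕ} {m lam C a κ t : ℝ} {x : EuclideanSpace ℝ (Fin n)}

lemma lapl_barenblattPressure :
    lapl (barenblattPressure lam C · t) x = -(lam / (t + 1)) * n :=
  lapl_eq_mul_of_hasGradientAt_smul (hasGradientAt_barenblattPressure lam C t) x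

lemma lapl_barenblattPressure_nonpos (hlam : 0 ≤ lam) (ht : -1 < t) :
    lapl (barenblattPressure lam C · t) x ≤ 0 := by
  have pos : 0 < t + 1 := by linarith
  rw [lapl_barenblattPressure, neg_mul, neg_nonpos]
  positivity

lemma pressureOperator_barenblattPressure (hm : 1 ≤ m) (ht : -1 < t) :
    pressureOperator m (barenblattPressure (barenblattExponent n m) C · t) x =
      -(1 - 2 * barenblattExponent n m) / (t + 1) *
          barenblattPressure (barenblattExponent n m) C x t +
        (barenblattExponent n m / (t + 1) * ‖x‖) ^ 2 := by
  rw [pressureOperator, norm_gradient_barenblattPressure (barenblattExponent_pos n hm).le ht,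
    lapl_barenblattPressure, ← mul_barenblattExponent n hm]
  ring

lemma hasDerivAt_barenblattPressure_pressureOperator (hm : 1 ≤ m) (ht : -1 < t) :
    HasDerivAt (barenblattPressure (barenblattExponent n m) C x)
      (pressureOperator m (barenblattPressure (barenblattExponent n m) C · t) x) t := by
  rw [pressureOperator_barenblattPressure hm ht]
  exact hasDerivAt_barenblattPressure ht

/-- The barrier `Ũ`: the Barenblatt pressure centred at `xs`, lowered by `2κ ∫₀ᵗ c`. The drift
coefficient `κ` is the product `C₁ a`. -/
noncomputable def loweredBarenblatt (lam C κ : ℝ) (xs x : EuclideanSpace ℝ (Fin n)) (t : ℝ) : ℝ :=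
  barenblattPressure lam C (x - xs) t - 2 * κ * ∫ s in (0 : ℝ)..t, barenblattSpeed lam C s

lemma loweredBarenblatt_le_barenblattPressure (hκ : 0 ≤ κ) (ht : 0 ≤ t)
    (xs x : EuclideanSpace ℝ (Fin n)) :
    loweredBarenblatt lam C κ xs x t ≤ barenblattPressure lam C (x - xs) t :=
  sub_le_self _ (mul_nonneg (by positivity) (integral_barenblattSpeed_nonneg ht))

lemma gradient_loweredBarenblatt (xs x : EuclideanSpace ℝ (Fin n)) :
    gradient (loweredBarenblatt lam C κ xs · t) x =
      gradient (barenblattPressure lam C · t) (x - xs) := by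
  simp only [loweredBarenblatt, gradient_sub_const]
  exact gradient_comp_sub_right (barenblattPressure lam C · t) xs x

lemma deriv_loweredBarenblatt_le (hm : 1 ≤ m) (hκ : 0 ≤ κ) (ht : 0 ≤ t)
    (xs x : EuclideanSpace ℝ (Fin n)) :
    deriv (loweredBarenblatt (barenblattExponent n m) C κ xs x) t ≤
      pressureOperator m (loweredBarenblatt (barenblattExponent n m) C κ xs · t) x -
        2 * κ * barenblattSpeed (barenblattExponent n m) C t := by
  have ht' : -1 < t := by linarith
  let profile (y : EuclideanSpace ℝ (Fin n)) := barenblattPressure (barenblattExponent n m) C y t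
  refine deriv_sub_le_pressureOperator_sub hm
    (u := fun y => barenblattPressure (barenblattExponent n m) C (y - xs))
    (hasDerivAt_barenblattPressure_pressureOperator hm ht')
    (pressureOperator_comp_sub_right profile xs x).ge
    ((lapl_comp_sub_right profile xs x).trans_le
      (lapl_barenblattPressure_nonpos (barenblattExponent_pos n hm).le ht'))
    ((hasDerivAt_integral_barenblattSpeed ht').const_mul (2 * κ))
    (mul_nonneg (by positivity) (integral_barenblattSpeed_nonneg ht))

theorem lowered_barenblatt_subsolution_general (hm : 1 ≤ m) (hκ : 0 ≤ κ) (ha : 0 ≤ a)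
    (hC : 0 ≤ C) (ht : 0 ≤ t) (haC : a * √C * (t + 1) ^ barenblattExponent n m ≤ 1)
    (xs x : EuclideanSpace ℝ (Fin n))
    (hU : 0 ≤ barenblattPressure (barenblattExponent n m) C (x - xs) t) :
    deriv (loweredBarenblatt (barenblattExponent n m) C κ xs x) t ≤
      pressureOperator m (loweredBarenblatt (barenblattExponent n m) C κ xs · t) x -
        κ * (‖gradient (loweredBarenblatt (barenblattExponent n m) C κ xs · t) x‖ +
          a * loweredBarenblatt (barenblattExponent n m) C κ xs x t) := by
  have ht' : -1 < t := by linarith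
  have exponent_nonneg := (barenblattExponent_pos n hm).le
  have gradient_le : ‖gradient (loweredBarenblatt (barenblattExponent n m) C κ xs · t) x‖ ≤
      barenblattSpeed (barenblattExponent n m) C t := by
    rw [gradient_loweredBarenblatt]
    exact norm_gradient_barenblattPressure_le_barenblattSpeed exponent_nonneg
      (barenblattExponent_le_half n hm) ht' hU
  have value_le : a * loweredBarenblatt (barenblattExponent n m) C κ xs x t ≤
      barenblattSpeed (barenblattExponent n m) C t :=
    (mul_le_mul_of_nonneg_left (loweredBarenblatt_le_barenblattPressure hκ ht xs x) ha).trans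
      (mul_barenblattPressure_le_barenblattSpeed ha exponent_nonneg hC ht' haC)
  have drift_le := mul_le_mul_of_nonneg_left (add_le_add gradient_le value_le) hκ
  linarith [deriv_loweredBarenblatt_le (C := C) hm hκ ht xs x]

end LoweredBarenblatt

/-- **The lowered Barenblatt profile is a subsolution with drift error.** With `C = a^{λ/2}`,
`c(t) = √C(t+1)^{λ−1}` and `Ũ(x,t) = U(x−x*,t) − 2C₁a ∫₀ᵗ c`, at every point of
positivity of `Ũ` with `0 ≤ t ≤ a⁻¹` one has
`Ũ_t ≤ (m−1)ŨΔŨ + |DŨ|² − C₁a(|DŨ| + aŨ)`. -/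
theorem lowered_barenblatt_subsolution
    {n : ℕ} (hn : 1 ≤ n) (m : ℝ) (hm : 1 < m)
    (lam C₁ a : ℝ) (hlam : lam = ((m - 1) * n + 2)⁻¹) (hC₁ : 0 < C₁)
    (ha : 0 < a) (ha4 : a ≤ 1 / 4)
    (xs : EuclideanSpace ℝ (Fin n))
    (C : ℝ) (hC : C = a ^ (lam / 2))
    (U : EuclideanSpace ℝ (Fin n) → ℝ → ℝ)
    (hU : ∀ x t, U x t = (C * (t + 1) ^ (2 * lam) - lam / 2 * ‖x‖ ^ 2) / (t + 1))
    (c : ℝ → ℝ) (hc : ∀ t, c t = Real.sqrt C * (t + 1) ^ (lam - 1))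
    (Ut : EuclideanSpace ℝ (Fin n) → ℝ → ℝ)
    (hUt : ∀ x t, Ut x t = U (x - xs) t - 2 * C₁ * a * ∫ s in (0 : ℝ)..t, c s) :
    ∀ (x : EuclideanSpace ℝ (Fin n)) (t : ℝ), 0 ≤ t → t ≤ a⁻¹ → 0 < Ut x t →
      deriv (fun s => Ut x s) t ≤
        (m - 1) * Ut x t * lapl (fun y => Ut y t) x
        + ‖gradient (fun y => Ut y t) x‖ ^ 2
        - C₁ * a * (‖gradient (fun y => Ut y t) x‖ + a * Ut x t) := by
  intro x t ht hta hpos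
  obtain rfl : lam = barenblattExponent n m := hlam
  obtain rfl : Ut = loweredBarenblatt (barenblattExponent n m) C (C₁ * a) xs := by
    funext y s
    simp only [hUt, hU, hc, loweredBarenblatt, barenblattPressure, barenblattSpeed, mul_assoc]
  have exponent_pos := barenblattExponent_pos n hm.le
  have hC1 : C ≤ 1 := hC.trans_le (Real.rpow_le_one ha.le (by linarith) (by positivity))
  have haC := mul_sqrt_mul_rpow_le_one exponent_pos.le (barenblattExponent_le_half n hm.le) hC1 ha
    (by linarith) ht hta
  have hκ : 0 ≤ C₁ * a := by positivity
  exact lowered_barenblatt_subsolution_general hm.le hκ ha.le (hC ▸ by positivity) ht haC xs x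
    (hpos.le.trans (loweredBarenblatt_le_barenblattPressure hκ ht xs x))
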